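/- The state E_{k,final} = (0, 2, 2, 2^3, 2^4 − 2, 2^5, 2^6 − 2, …, 2^{2k−1}, 2^{2k} − 2, 2^{2k+1}, 2^{2k+2} − 4, 0) is embanked, with h(E_{k,final}) = (2^{2k+2} − 1, 2^{2k+2} − 2) and N(E_{k,final}) = E_{k,final}[2k+1]; moreover N′(E_{k,final}) = (0, 2, 2^2, 2^3, …, 2^{2k}, 2^{2k+1}, 2^{2k+2} − 2, 0). -/

import Mathlib

/-!
The state `E_{k,final}` is the first of a chain of empty states `E_0, …, E_{k+1}` (`Est k s`) whose
last member is the claimed value of `N'`; `E_{s+1}` arises from `E_s` by adding `2` to the entry of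
index `2k + 1 - 2s`. The heart of the proof is that `N(E_s) = E_{s+1}` for all `s ≤ k`
(`nextEmpty`), with a trajectory that is known explicitly.

An Increment rule moves the Gray code value `n` by one and lowers `a_0` by one, the direction being
decided by the parity of `a_0`; along a monotone run the entry `a_j` (`j ≥ 1`) grows by the change
of `⟨n / 2^j⟩` in absolute value (`step`). From `E_s` the trajectory is as follows.

* A Zero rule makes `a_0 = -1`, so a Halve rule follows; then `n = 2^{2k+2} - 1` and
  `a_0 = 2^{2k+2} - 4`.
* `n` climbs until `a_0 = -1`, which happens at `n = 2^{2k+3} - 4` (`U_step`, `iter_U`). The second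
  Halve rule turns this into `n = 2^{2k+2} - 2`, and the new `a_0` has the same value (`P_U_top`).
* `n` falls with `a_0 = n`, so that no further Halve rule occurs, until all entries are even
  (`D_step`, `iter_D`). The total change of every entry is a sum of nearest-integer differences,
  and evaluating it gives exactly `E_{s+1}` (`D_zero`).

No state in between is empty, because an empty state has only even entries
(`not_empty_of_odd`). The values `h_1`, `h_2` are read off from the parity invariant
`a_j ≡ ⟨n / 2^j⟩` (`nOf_eq`). Finally `N'` iterates `N` exactly `k + 1` times, since
`N(E_0) = E_0[2k+1]` determines the index `2k + 1`.
-/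


open scoped Classical

namespace Skelet17

/-- The five kinds of transition rules. -/
inductive Rule
  | overflow | halt | zero | halve | increment
  deriving DecidableEq

/-- A state `(a_ℓ, …, a_1, a_0)` (written left to right, `a_0` rightmost) is stored
as the list `[a_0, a_1, …, a_ℓ]`, i.e. with the *rightmost* entry first. -/
abbrev State := List ℤ

/-- The leftmost entry `a_ℓ` of a state. -/
def leftmost (S : State) : ℤ := S.getLastD 0

/-- The entry `a_i(S)`. -/
def entry (S : State) (i : ℕ) : ℤ := S.getD i 0

/-- `ℓ(S) = |S| - 1`. -/
def ell (S : State) : ℕ := S.length - 1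

/-- The Overflow rule applies: the leftmost entry is odd and all other entries are even. -/
def OverflowCond (S : State) : Prop := Odd (leftmost S) ∧ ∀ x ∈ S.dropLast, Even x

/-- The Halt rule applies: all entries are even and the two leftmost entries are `0`. -/
def HaltCond (S : State) : Prop :=
  (∀ x ∈ S, Even x) ∧ S.getLastD 1 = 0 ∧ S.dropLast.getLastD 1 = 0

/-- The Zero rule applies: all entries are even and the Halt rule does not apply. -/
def ZeroCond (S : State) : Prop := (∀ x ∈ S, Even x) ∧ ¬ HaltCond S

/-- The Halve rule applies: `a_0 = -1` and none of the earlier rules applies. -/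
def HalveCond (S : State) : Prop :=
  ¬ OverflowCond S ∧ ¬ HaltCond S ∧ ¬ ZeroCond S ∧ S.headD 0 = -1

/-- The rule applied to a state (the first matching rule). -/
noncomputable def ruleOf (S : State) : Rule :=
  if OverflowCond S then .overflow
  else if HaltCond S then .halt
  else if ZeroCond S then .zero
  else if S.headD 0 = -1 then .halve
  else .increment

/-- The transition function `P`.  (On a Halt state the process stops; we set `P S = S` there.)
Recall the list stores `a_0` first, so e.g. the Overflow rule
`(2a_ℓ+1, 2a_{ℓ-1}, …, 2a_0) ↦ (0, 2a_ℓ+2, 2a_{ℓ-1}, …, 2a_0)` appends a `0` at the end of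
the list and adds `1` to the previously last element. -/
noncomputable def P (S : State) : State :=
  match ruleOf S with
  | .overflow => S.dropLast ++ [leftmost S + 1, 0]
  | .halt => S
  | .zero => (S.set 0 (S.headD 0 - 1)).set (S.length - 1) (leftmost S + 1) ++ [0, 0]
  | .halve => S.tail
  | .increment =>
      let i := S.findIdx (fun x => x % 2 != 0)   -- index of the rightmost odd entry
      (S.set (i + 1) (S.getD (i + 1) 0 + 1)).set 0 (S.headD 0 - 1)

/-- `S ↦ T` : some iterate of `P` sends `S` to `T`. -/
def Reaches (S T : State) : Prop := ∃ m : ℕ, P^[m] S = T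

/-- `σ(S) = +1` if the sum of the entries is odd, `-1` if it is even. -/
noncomputable def sigma (S : State) : ℤ := if Odd S.sum then 1 else -1

/-- `n(S)`: the natural number whose Gray code digits (least significant first) are
`a_1 mod 2, a_2 mod 2, …, a_ℓ mod 2`.  Equivalently (standard Gray-code decoding),
bit `i` of `n(S)` is the parity of `a_{i+1} + ⋯ + a_ℓ`. -/
def nOf (S : State) : ℕ :=
  ∑ i ∈ Finset.range (ell S),
    2 ^ i * ((∑ j ∈ Finset.Icc (i + 1) (ell S), entry S j) % 2).toNat

/-- `⟨a / 2^j⟩` : the nearest integer to `a / 2^j`, rounding half-integers up. -/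
def nearest (j a : ℕ) : ℕ := (2 * a + 2 ^ j) / 2 ^ (j + 1)

/-- `d_j(a, b) = |⟨a/2^j⟩ - ⟨b/2^j⟩|`. -/
def dd (j a b : ℕ) : ℕ := Nat.dist (nearest j a) (nearest j b)

/-- `S_k = (0, 2, 2^2, …, 2^{2k}, 0)`. -/
def Sk (k : ℕ) : State :=
  0 :: (((List.range (2 * k)).map fun i => (2 : ℤ) ^ (2 * k - i)) ++ [0])

/-- An empty state: `n(E) = 0`, `σ(E) = -1`, and the next rule applied is not Halt. -/
def IsEmptyState (E : State) : Prop :=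
  E ≠ [] ∧ nOf E = 0 ∧ sigma E = -1 ∧ ruleOf E ≠ Rule.halt

/-- `m` is the first positive time at which the trajectory of `E` is at an empty state. -/
def NextEmptyAt (E : State) (m : ℕ) : Prop :=
  0 < m ∧ IsEmptyState (P^[m] E) ∧ ∀ t, 0 < t → t < m → ¬ IsEmptyState (P^[t] E)

/-- `N(E)` : the next empty state after `E` (junk value `[]` if it does not exist). -/
noncomputable def N (E : State) : State :=
  if h : ∃ m, NextEmptyAt E m then P^[h.choose] E else []

/-- The rule applied at time `j` belongs to `T_E`, the sequence of rules from `E` to the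
next empty state after `E` (all rules after `E` when no next empty state exists). -/
def InTE (E : State) (j : ℕ) : Prop := ∀ t, 0 < t → t ≤ j → ¬ IsEmptyState (P^[t] E)

/-- Weakly embanked: `T_E` consists of one Zero rule at the start and contains at least two
Halve rules, and all other rules before the second Halve rule are Increment rules. -/
def WeaklyEmbanked (E : State) : Prop :=
  IsEmptyState E ∧
  ∃ j₁ j₂, 0 < j₁ ∧ j₁ < j₂ ∧ InTE E j₂ ∧
    ruleOf (P^[j₁] E) = Rule.halve ∧ ruleOf (P^[j₂] E) = Rule.halve ∧
    ∀ t, 0 < t → t < j₂ → t ≠ j₁ → ruleOf (P^[t] E) = Rule.increment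

/-- Embanked: the next empty state `N(E)` exists and the non-Increment rules of `T_E` consist
of exactly one Zero rule at the start and exactly two Halve rules elsewhere. -/
def Embanked (E : State) : Prop :=
  IsEmptyState E ∧
  ∃ m j₁ j₂, NextEmptyAt E m ∧ 0 < j₁ ∧ j₁ < j₂ ∧ j₂ < m ∧
    ruleOf (P^[j₁] E) = Rule.halve ∧ ruleOf (P^[j₂] E) = Rule.halve ∧
    ∀ t, 0 < t → t < m → t ≠ j₁ → t ≠ j₂ → ruleOf (P^[t] E) = Rule.increment

/-- `h_i(E)` (`i ∈ {1,2}`): the value of `n` at the state immediately *after* the `i`-th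
Halve rule applied after `E`. -/
noncomputable def hVal (E : State) (i : ℕ) : ℕ :=
  nOf (P^[Nat.nth (fun j => ruleOf (P^[j] E) = Rule.halve) (i - 1) + 1] E)

/-- `s_i(E)` (`i ∈ {1,2}`): the value of `n` at the state immediately *before* the `i`-th
Halve rule applied after `E`. -/
noncomputable def sVal (E : State) (i : ℕ) : ℕ :=
  nOf (P^[Nat.nth (fun j => ruleOf (P^[j] E) = Rule.halve) (i - 1)] E)

/-- `E[i]` : the state `E` with the entry `a_i` replaced by `a_i + 2`. -/
def bump (E : State) (i : ℕ) : State := E.set i (E.getD i 0 + 2)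

/-- `N'(E) = N^{⌈(i+1)/2⌉}(E)` for an embanked state `E` with `N(E) = E[i]`
(junk value `E` if no such `i` exists). -/
noncomputable def N' (E : State) : State :=
  if h : ∃ i, i < E.length ∧ N E = bump E i then N^[(h.choose + 2) / 2] E else E

/-- A rooted embanked state: an embanked state obtained from `S_k` by applying `N'`
some number of times. -/
def RootedEmbanked (k : ℕ) (E : State) : Prop :=
  Embanked E ∧ ∃ e : ℕ, N'^[e] (Sk k) = E

/-- `κ_{E→E'}(j)` : the number of steps `S ↦ N(S)` with `N(S) = S[j]` along the chain
`E, N(E), N²(E), …, N^[t](E) = E'`. -/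
noncomputable def kappa (E : State) (t j : ℕ) : ℕ :=
  ((Finset.range t).filter fun s => N (N^[s] E) = bump (N^[s] E) j).card


/-- `E_{k,final} = (0, 2, 2, 2^3, 2^4-2, 2^5, 2^6-2, …, 2^{2k-1}, 2^{2k}-2, 2^{2k+1}, 2^{2k+2}-4, 0)`,
i.e. `a_0 = 0`, `a_1 = 2^{2k+2} - 4`, `a_j = 2^{2k+3-j} - 2·(j mod 2)` for `j ∈ [2, 2k+2]`,
and `a_{2k+3} = 0` (stored rightmost-first). -/
def Efinal (k : ℕ) : State :=
  0 :: ((2 : ℤ) ^ (2 * k + 2) - 4) ::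
    (((List.range (2 * k + 1)).map fun i =>
        (2 : ℤ) ^ (2 * k + 1 - i) - 2 * ((i % 2 : ℕ) : ℤ)) ++ [0])

/-- `(0, 2, 2^2, 2^3, …, 2^{2k}, 2^{2k+1}, 2^{2k+2} - 2, 0)`, i.e. `a_0 = 0`,
`a_1 = 2^{2k+2} - 2`, `a_j = 2^{2k+3-j}` for `j ∈ [2, 2k+2]`, and `a_{2k+3} = 0`
(stored rightmost-first). -/
def Eprime (k : ℕ) : State :=
  0 :: ((2 : ℤ) ^ (2 * k + 2) - 2) ::
    (((List.range (2 * k + 1)).map fun i => (2 : ℤ) ^ (2 * k + 1 - i)) ++ [0])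

/-! ### States as functions -/

/-- The state `(f (m-1), …, f 1, f 0)` given by the first `m` values of `f`. -/
def lst (m : ℕ) (f : ℕ → ℤ) : State := (List.range m).map f

lemma length_lst (m : ℕ) (f : ℕ → ℤ) : (lst m f).length = m := by simp [lst]

lemma getElem_lst (m : ℕ) (f : ℕ → ℤ) (i : ℕ) (h : i < (lst m f).length) :
    (lst m f)[i] = f i := by simp [lst]

lemma getD_lst (m : ℕ) (f : ℕ → ℤ) (i : ℕ) (h : i < m) : (lst m f).getD i 0 = f i := by
  simp [lst, List.getD, h]

lemma mem_lst {m : ℕ} {f : ℕ → ℤ} {x : ℤ} : x ∈ lst m f ↔ ∃ j, j < m ∧ f j = x := by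
  simp [lst]

lemma lst_congr {m : ℕ} {f g : ℕ → ℤ} (h : ∀ j, j < m → f j = g j) : lst m f = lst m g := by
  simpa [lst] using h

lemma dropLast_lst (m : ℕ) (f : ℕ → ℤ) : (lst (m + 1) f).dropLast = lst m f := by
  simp [lst, List.range_succ]

lemma getLastD_lst (m : ℕ) (f : ℕ → ℤ) (d : ℤ) : (lst (m + 1) f).getLastD d = f m := by
  simp [lst, List.range_succ, List.getLastD_eq_getLast?]

lemma headD_lst (m : ℕ) (f : ℕ → ℤ) : (lst (m + 1) f).headD 0 = f 0 := by
  simp [lst, List.range_succ_eq_map]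

lemma tail_lst (m : ℕ) (f : ℕ → ℤ) : (lst (m + 1) f).tail = lst m (fun j => f (j + 1)) := by
  simp [lst, List.range_succ_eq_map]

/-! ### The rules on such states -/

lemma not_overflow_lst {m v : ℕ} {f : ℕ → ℤ} (hv : v < m) (ho : Odd (f v)) :
    ¬ OverflowCond (lst (m + 1) f) := by
  rintro ⟨-, h⟩
  rw [dropLast_lst] at h
  exact Int.not_even_iff_odd.2 ho (h _ (mem_lst.2 ⟨v, hv, rfl⟩))

lemma not_allEven_lst {m v : ℕ} {f : ℕ → ℤ} (hv : v < m) (ho : Odd (f v)) :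
    ¬ ∀ x ∈ lst m f, Even x := fun h =>
  Int.not_even_iff_odd.2 ho (h _ (mem_lst.2 ⟨v, hv, rfl⟩))

lemma rule_of_odd {m v : ℕ} {f : ℕ → ℤ} (hv : v < m) (ho : Odd (f v)) :
    ruleOf (lst (m + 1) f) = if f 0 = -1 then Rule.halve else Rule.increment := by
  have h1 := not_overflow_lst hv ho
  have h2 := not_allEven_lst (show v < m + 1 by omega) ho
  unfold ruleOf
  rw [if_neg h1, if_neg (fun h => h2 h.1), if_neg (fun h => h2 h.1), headD_lst]

lemma rule_zero {m : ℕ} {f : ℕ → ℤ} (he : ∀ j, j ≤ m + 1 → Even (f j)) (h0 : f m ≠ 0) :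
    ruleOf (lst (m + 2) f) = Rule.zero := by
  have h2 : ∀ x ∈ lst (m + 2) f, Even x := by
    intro x hx
    obtain ⟨j, hj, rfl⟩ := mem_lst.1 hx
    exact he j (by omega)
  have h1 : ¬ OverflowCond (lst (m + 2) f) := by
    rintro ⟨h, -⟩
    rw [leftmost, getLastD_lst] at h
    exact Int.not_even_iff_odd.2 h (he _ le_rfl)
  have h3 : ¬ HaltCond (lst (m + 2) f) := by
    rintro ⟨-, -, h⟩
    rw [dropLast_lst, getLastD_lst] at h
    exact h0 h
  unfold ruleOf
  rw [if_neg h1, if_neg h3, if_pos ⟨h2, h3⟩]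

lemma P_zero {m : ℕ} {f : ℕ → ℤ} (he : ∀ j, j ≤ m + 1 → Even (f j)) (h0 : f m ≠ 0)
    (hz : ∀ j, m + 2 ≤ j → f j = 0) :
    P (lst (m + 2) f) =
      lst (m + 4) (fun j => f j + (if j = m + 1 then 1 else 0) - (if j = 0 then 1 else 0)) := by
  unfold P
  rw [rule_zero he h0]
  simp only [headD_lst, leftmost, getLastD_lst, length_lst]
  apply List.ext_getElem
  · simp [length_lst]
  intro i h1 h2
  rw [getElem_lst]
  simp only [length_lst] at h2
  by_cases hi : i < m + 2
  · rw [List.getElem_append_left (by simpa [length_lst] using hi)]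
    simp only [List.getElem_set, getElem_lst]
    rcases Nat.eq_zero_or_pos i with rfl | hpos
    · simp
    · by_cases h : i = m + 1
      · subst h; simp
      · rw [if_neg (by omega), if_neg (by omega), if_neg h, if_neg (by omega)]; simp
  · rw [List.getElem_append_right (by simp [length_lst]; omega), hz i (by omega)]
    have : i = m + 2 ∨ i = m + 3 := by omega
    rcases this with rfl | rfl <;> simp [length_lst]

lemma P_halve {m : ℕ} {f : ℕ → ℤ} (h : f 0 = -1) :
    P (lst (m + 2) f) = lst (m + 1) (fun j => f (j + 1)) := by
  unfold P
  rw [rule_of_odd (v := 0) (by omega) (by rw [h]; decide), if_pos h]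
  exact tail_lst _ _

lemma P_inc {m v : ℕ} {f : ℕ → ℤ} (hv : v < m) (ho : Odd (f v)) (he : ∀ j, j < v → Even (f j))
    (h : f 0 ≠ -1) :
    P (lst (m + 1) f) =
      lst (m + 1) (fun j => f j + (if j = v + 1 then 1 else 0) - (if j = 0 then 1 else 0)) := by
  unfold P
  rw [rule_of_odd hv ho, if_neg h]
  have hi : (lst (m + 1) f).findIdx (fun x => x % 2 != 0) = v := by
    rw [List.findIdx_eq (by rw [length_lst]; omega)]
    simp only [getElem_lst]
    refine ⟨by simpa [Int.odd_iff] using ho, fun j hj => ?_⟩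
    simpa using Int.even_iff.1 (he j hj)
  simp only [hi, headD_lst]
  rw [getD_lst _ _ _ (by omega)]
  apply List.ext_getElem
  · simp [length_lst]
  intro i h1 h2
  simp only [List.getElem_set, getElem_lst]
  rcases Nat.eq_zero_or_pos i with rfl | hpos
  · simp
  · by_cases h : i = v + 1
    · subst h; simp
    · rw [if_neg (by omega), if_neg (by omega), if_neg h, if_neg (by omega)]; simp

/-! ### Empty states -/

lemma sum_lst (m : ℕ) (f : ℕ → ℤ) : (lst m f).sum = ∑ j ∈ Finset.range m, f j := by
  simp [lst, Finset.sum_range, ← List.sum_ofFn, List.ofFn_eq_map]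
  congr 1
  apply List.ext_getElem <;> simp

lemma nOf_lst (m : ℕ) (f : ℕ → ℤ) : nOf (lst (m + 1) f) =
    ∑ i ∈ Finset.range m, 2 ^ i * ((∑ j ∈ Finset.Icc (i + 1) m, f j) % 2).toNat := by
  unfold nOf ell
  rw [length_lst, Nat.add_sub_cancel]
  refine Finset.sum_congr rfl fun i hi => ?_
  congr 3
  refine Finset.sum_congr rfl fun j hj => ?_
  exact getD_lst _ _ _ (by have := (Finset.mem_Icc.1 hj).2; omega)

/-- An empty state has even entries only: `n = 0` forces this for `a_1, …, a_ℓ`, and then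
`σ = -1` forces it for `a_0`. -/
lemma not_empty_of_odd {m v : ℕ} {f : ℕ → ℤ} (hv : v < m + 1) (ho : Odd (f v)) :
    ¬ IsEmptyState (lst (m + 1) f) := by
  rintro ⟨-, hn, hs, -⟩
  rw [nOf_lst, Finset.sum_eq_zero_iff] at hn
  have hsum : ∀ i, i ≤ m → Even (∑ j ∈ Finset.Icc (i + 1) m, f j) := by
    intro i hi
    rcases hi.lt_or_eq with h | rfl
    · have := hn i (Finset.mem_range.2 h)
      have h2 : ((∑ j ∈ Finset.Icc (i + 1) m, f j) % 2).toNat = 0 := by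
        simpa using this
      rw [Int.even_iff]
      omega
    · simp
  have heven : ∀ j, 1 ≤ j → j ≤ m → Even (f j) := by
    intro j h1 h2
    have e1 := hsum (j - 1) (by omega)
    have e2 := hsum j h2
    rw [Nat.sub_add_cancel h1, ← Finset.add_sum_Ioc_eq_sum_Icc h2] at e1
    have : Finset.Ioc j m = Finset.Icc (j + 1) m := by ext; simp
    rw [this] at e1
    exact (Int.even_add.1 e1).2 e2
  have h0 : Even (f 0) := by
    have e : Even (lst (m + 1) f).sum := by
      by_contra h
      rw [sigma, if_pos (Int.not_even_iff_odd.1 h)] at hs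
      norm_num at hs
    rw [sum_lst, Finset.sum_range_succ', Int.even_add] at e
    exact e.1 (Finset.even_sum _ fun j hj => heven _ (by omega)
      (by have := Finset.mem_range.1 hj; omega))
  rcases Nat.eq_zero_or_pos v with rfl | hp
  · exact Int.not_even_iff_odd.2 ho h0
  · exact Int.not_even_iff_odd.2 ho (heven v hp (by omega))

lemma isEmpty_of_even {m : ℕ} {f : ℕ → ℤ} (he : ∀ j, j ≤ m + 1 → Even (f j)) (h0 : f m ≠ 0) :
    IsEmptyState (lst (m + 2) f) := by
  refine ⟨?_, ?_, ?_, ?_⟩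
  · intro h
    have := congrArg List.length h
    simp [length_lst] at this
  · rw [nOf_lst]
    refine Finset.sum_eq_zero fun i _ => ?_
    have : Even (∑ j ∈ Finset.Icc (i + 1) (m + 1), f j) :=
      Finset.even_sum _ fun j hj => he j (Finset.mem_Icc.1 hj).2
    rw [Int.even_iff.1 this]; simp
  · rw [sigma, if_neg]
    rw [sum_lst, Int.not_odd_iff_even]
    exact Finset.even_sum _ fun j hj => he j (by have := Finset.mem_range.1 hj; omega)
  · rw [rule_zero he h0]; decide

/-! ### Nearest integers to `n / 2^j` -/

lemma nearest_zero (n : ℕ) : nearest 0 n = n := by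
  unfold nearest; omega

lemma nearest_double (j n : ℕ) : nearest (j + 1) (2 * n) = nearest j n := by
  unfold nearest
  rw [show 2 * (2 * n) + 2 ^ (j + 1) = 2 * (2 * n + 2 ^ j) by ring,
    show 2 ^ (j + 1 + 1) = 2 * 2 ^ (j + 1) by ring, Nat.mul_div_mul_left _ _ (by norm_num)]

lemma nearest_n0 {L j : ℕ} (h1 : 1 ≤ j) :
    nearest j (2 ^ L - 1) = if j ≤ L then 2 ^ (L - j) else 0 := by
  unfold nearest
  obtain ⟨i, rfl⟩ : ∃ i, j = i + 1 := ⟨j - 1, by omega⟩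
  have hi : 0 < 2 ^ i := by positivity
  split_ifs with h
  · obtain ⟨d, rfl⟩ := Nat.exists_eq_add_of_le h
    have hd : 0 < 2 ^ d := by positivity
    rw [Nat.add_sub_cancel_left]
    have e : 2 ^ (i + 1 + d) = 2 * (2 ^ i * 2 ^ d) := by ring
    have e2 : 2 ^ (i + 1 + 1) = 4 * 2 ^ i := by ring
    have e3 : 2 ^ (i + 1) = 2 * 2 ^ i := by ring
    have := Nat.mul_pos hi hd
    apply Nat.div_eq_of_lt_le
    · rw [e, e2, e3, show 2 ^ d * (4 * 2 ^ i) = 4 * (2 ^ i * 2 ^ d) by ring]; omega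
    · rw [e, e2, e3, show (2 ^ d + 1) * (4 * 2 ^ i) = 4 * (2 ^ i * 2 ^ d) + 4 * 2 ^ i by ring]
      omega
  · apply Nat.div_eq_of_lt
    have h3 : 2 ^ L ≤ 2 ^ i := Nat.pow_le_pow_right (by norm_num) (by omega)
    have e2 : 2 ^ (i + 1 + 1) = 4 * 2 ^ i := by ring
    have e3 : 2 ^ (i + 1) = 2 * 2 ^ i := by ring
    have : 0 < 2 ^ L := by positivity
    omega

lemma nearest_n1 {L j : ℕ} (hL : 2 ≤ L) (h1 : 1 ≤ j) :
    nearest j (2 ^ L - 2) =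
      if j = 1 then 2 ^ (L - 1) - 1 else if j ≤ L then 2 ^ (L - j) else 0 := by
  obtain ⟨M, rfl⟩ : ∃ M, L = M + 1 := ⟨L - 1, by omega⟩
  obtain ⟨i, rfl⟩ : ∃ i, j = i + 1 := ⟨j - 1, by omega⟩
  rw [show 2 ^ (M + 1) - 2 = 2 * (2 ^ M - 1) by rw [pow_succ]; omega, nearest_double]
  rcases Nat.eq_zero_or_pos i with rfl | hi
  · simp [nearest_zero]
  · rw [nearest_n0 hi]
    simp [show i ≠ 0 by omega]

lemma nearest_le_val {v j o : ℕ} (h : j ≤ v) : nearest j (2 ^ v * o) = 2 ^ (v - j) * o := by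
  obtain ⟨d, rfl⟩ := Nat.exists_eq_add_of_le h
  unfold nearest
  have : 0 < 2 ^ j := by positivity
  rw [Nat.add_sub_cancel_left,
    show 2 * (2 ^ (j + d) * o) + 2 ^ j = 2 ^ j + 2 ^ (j + 1) * (2 ^ d * o) by ring,
    Nat.add_mul_div_left _ _ (by positivity), Nat.div_eq_of_lt (by rw [pow_succ]; omega), zero_add]

/-- Passing from `n` to `n + 1`, the nearest integer to `n / 2^j` (`j ≥ 1`) changes exactly
when `j - 1` is the exponent of `2` in `n + 1`. -/
lemma nearest_succ {n v o j : ℕ} (ho : Odd o) (hn : n + 1 = 2 ^ v * o) (hj : 1 ≤ j) :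
    nearest j (n + 1) = nearest j n + if j = v + 1 then 1 else 0 := by
  obtain ⟨i, rfl⟩ : ∃ i, j = i + 1 := ⟨j - 1, by omega⟩
  have key : ∀ n, nearest (i + 1) n = (n + 2 ^ i) / 2 ^ i / 2 := by
    intro n
    unfold nearest
    rw [Nat.div_div_eq_div_mul, show 2 * n + 2 ^ (i + 1) = 2 * (n + 2 ^ i) by ring,
      show 2 ^ (i + 1 + 1) = 2 * (2 ^ i * 2) by ring, Nat.mul_div_mul_left _ _ (by norm_num)]
  have hpi : 0 < 2 ^ i := by positivity
  rw [key, key, Nat.add_div_right _ hpi, Nat.add_div_right _ hpi,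
    (Nat.succ_div : (n + 1) / 2 ^ i = _)]
  by_cases hd : 2 ^ i ∣ n + 1
  · rw [if_pos hd]
    have hiv : i ≤ v := by
      rw [hn] at hd
      have h2 : 2 ^ i ∣ 2 ^ v :=
        (Nat.Coprime.pow_left i (Nat.coprime_two_left.2 ho)).dvd_of_dvd_mul_right hd
      exact (Nat.pow_dvd_pow_iff_le_right (by norm_num)).1 h2
    obtain ⟨d, rfl⟩ := Nat.exists_eq_add_of_le hiv
    -- the quotient after the step is `2^d * o`, whose parity decides
    have hq : n / 2 ^ i + 1 = 2 ^ d * o := by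
      have := (Nat.succ_div : (n + 1) / 2 ^ i = _)
      rw [if_pos hd, hn, show 2 ^ (i + d) * o = 2 ^ i * (2 ^ d * o) by ring,
        Nat.mul_div_cancel_left _ hpi] at this
      exact this.symm
    rcases Nat.eq_zero_or_pos d with rfl | hdpos
    · rw [if_pos (by omega)]
      obtain ⟨q, rfl⟩ := ho
      omega
    · rw [if_neg (by omega)]
      obtain ⟨c, rfl⟩ : ∃ c, d = c + 1 := ⟨d - 1, by omega⟩
      rw [pow_succ, mul_right_comm] at hq
      omega
  · rw [if_neg hd, if_neg]
    · rfl
    · intro h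
      apply hd
      rw [hn, show i = v by omega]
      exact dvd_mul_right _ _

/-! ### Runs of Increment rules -/

/-- An Increment rule moves the Gray code between `n` and `n + 1`: upwards if
`a_j ≡ ⟨n / 2^j⟩` for `j ≥ 1` and `a_0 ≡ n + 1` modulo `2`, and downwards if
`a_j ≡ ⟨(n + 1) / 2^j⟩` for all `j ≥ 0`. The entries up to the rightmost odd one satisfy both
kinds of congruences, so the two directions have a common proof and the same effect on the
entries. -/
lemma step {m n : ℕ} {f : ℕ → ℤ} (hn : n + 1 < 2 ^ m)
    (hp : ∀ j, j ≤ m → (2 : ℤ) ∣ f j - nearest j (n + 1) ∨ 1 ≤ j ∧ (2 : ℤ) ∣ f j - nearest j n)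
    (h : f 0 ≠ -1) :
    (∃ v < m, Odd (f v)) ∧
    P (lst (m + 1) f) = lst (m + 1) (fun j => if j = 0 then f 0 - 1 else
      f j + (nearest j (n + 1) - nearest j n)) := by
  obtain ⟨v, o, ho, hv⟩ := Nat.exists_eq_two_pow_mul_odd (n := n + 1) (by omega)
  have hvm : v < m := by
    by_contra hcon
    have h1 : 2 ^ m ≤ 2 ^ v := Nat.pow_le_pow_right (by norm_num) (by omega)
    have h2 : 2 ^ v ≤ 2 ^ v * o := Nat.le_mul_of_pos_right _ ho.pos
    omega
  have hval : ∀ j, j ≤ v → (2 : ℤ) ∣ f j - (2 ^ (v - j) * o : ℕ) := by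
    intro j hj
    rw [← nearest_le_val hj, ← hv]
    rcases hp j (by omega) with h1 | ⟨hpos, h1⟩
    · exact h1
    · rw [nearest_succ ho hv hpos, if_neg (by omega)]
      simpa using h1
  have hodd : Odd (f v) := by
    have h1 := hval v le_rfl
    obtain ⟨q, rfl⟩ := ho
    rw [Int.odd_iff]
    simp at h1
    omega
  have heven : ∀ j, j < v → Even (f j) := by
    intro j hj
    have h1 := hval j hj.le
    obtain ⟨c, hc⟩ : ∃ c, v - j = c + 1 := ⟨v - j - 1, by omega⟩
    rw [hc, pow_succ, mul_right_comm] at h1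
    rw [Int.even_iff]
    push_cast at h1
    omega
  refine ⟨⟨v, hvm, hodd⟩, ?_⟩
  rw [P_inc hvm hodd heven h]
  refine lst_congr fun j _ => ?_
  rcases Nat.eq_zero_or_pos j with rfl | hpos
  · simp
  · rw [nearest_succ ho hv hpos, if_neg (show j ≠ 0 by omega), if_neg (show j ≠ 0 by omega)]
    push_cast
    split_ifs <;> omega

/-! ### Decoding the Gray code -/

lemma nearest_parity (j n : ℕ) : nearest (j + 1) n % 2 = (n / 2 ^ j + n / 2 ^ (j + 1)) % 2 := by
  have : nearest (j + 1) n = (n / 2 ^ j + 1) / 2 := by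
    unfold nearest
    rw [← Nat.add_div_right _ (by positivity), Nat.div_div_eq_div_mul,
      show 2 * n + 2 ^ (j + 1) = 2 * (n + 2 ^ j) by ring,
      show 2 ^ (j + 1 + 1) = 2 * (2 ^ j * 2) by ring, Nat.mul_div_mul_left _ _ (by norm_num)]
  rw [this, pow_succ, ← Nat.div_div_eq_div_mul]
  have h : n / 2 ^ j + n / 2 ^ j / 2 = (n / 2 ^ j + 1) / 2 + 2 * (n / 2 ^ j / 2) := by omega
  rw [h, Nat.add_mul_mod_self_left]

lemma sum_nearest_parity (n i d : ℕ) :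
    (∑ j ∈ Finset.Icc (i + 1) (i + d), nearest j n) % 2 = (n / 2 ^ i + n / 2 ^ (i + d)) % 2 := by
  induction d with
  | zero => simp; omega
  | succ d ih =>
    rw [← add_assoc, Finset.sum_Icc_succ_top (by omega), Nat.add_mod, ih, nearest_parity]
    omega

lemma sum_bits (m n : ℕ) : ∑ i ∈ Finset.range m, 2 ^ i * (n / 2 ^ i % 2) = n % 2 ^ m := by
  induction m with
  | zero => simp [Nat.mod_one]
  | succ m ih => rw [Finset.sum_range_succ, ih, Nat.mod_pow_succ]

/-- If `a_j ≡ ⟨n / 2^j⟩` modulo `2` for all `j ≥ 1`, the Gray code of the state decodes to `n`. -/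
lemma nOf_eq {m n : ℕ} {f : ℕ → ℤ} (hn : n < 2 ^ m)
    (hp : ∀ j, 1 ≤ j → j ≤ m → (2 : ℤ) ∣ f j - nearest j n) : nOf (lst (m + 1) f) = n := by
  rw [nOf_lst]
  refine Eq.trans ?_ ((sum_bits m n).trans (Nat.mod_eq_of_lt hn))
  refine Finset.sum_congr rfl fun i hi => ?_
  obtain ⟨d, rfl⟩ := Nat.exists_eq_add_of_le (Finset.mem_range.1 hi).le
  have h1 := sum_nearest_parity n i d
  rw [Nat.div_eq_of_lt hn, add_zero] at h1
  have h2 : (2 : ℤ) ∣ ∑ j ∈ Finset.Icc (i + 1) (i + d), f j -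
      ((∑ j ∈ Finset.Icc (i + 1) (i + d), nearest j n : ℕ) : ℤ) := by
    push_cast
    rw [← Finset.sum_sub_distrib]
    refine Finset.dvd_sum fun j hj => hp j ?_ ?_ <;> have := Finset.mem_Icc.1 hj <;> omega
  congr 1
  omega

/-! ### The chain of empty states from `E_{k,final}` to `N'(E_{k,final})` -/

/-- The entry `a_j` of the `s`-th state of the chain (`0 ≤ s ≤ k + 1`). Relative to
`(0, 2, 2^2, …, 2^{2k+1}, 2^{2k+2} - 2, 0)`, exactly the entries at the odd indices
`j ≤ 2k + 1 - 2s` are smaller by `2`. Indices beyond the list get the value `0`. -/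
def A (k s j : ℕ) : ℤ :=
  if j = 0 ∨ 2 * k + 3 ≤ j then 0 else
    2 ^ (2 * k + 3 - j) - (if j = 1 then 2 else 0) -
      (if j % 2 = 1 ∧ j + 2 * s ≤ 2 * k + 1 then 2 else 0)

/-- The `s`-th state of the chain of empty states. -/
def Est (k s : ℕ) : State := lst (2 * k + 4) (A k s)

/-- The entries of the state with Gray code value `n` between the two Halve rules: here
`n` climbs from `2^{2k+2} - 1` to `2^{2k+3} - 4`. -/
def U (k s n j : ℕ) : ℤ :=
  if j = 0 then 2 ^ (2 * k + 3) - 5 - n else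
    A k s (j + 1) + (if j = 2 * k + 2 then 1 else 0) + nearest j n - nearest j (2 ^ (2 * k + 2) - 1)

/-- The entries of the state with Gray code value `n` after the second Halve rule: here
`n` falls from `2^{2k+2} - 2` to `0`. -/
def D (k s n j : ℕ) : ℤ :=
  if j = 0 then n else
    U k s (2 ^ (2 * k + 3) - 4) (j + 1) + nearest j (2 ^ (2 * k + 2) - 2) - nearest j n

lemma A_out {k s j : ℕ} (h : 2 * k + 3 ≤ j) : A k s j = 0 := by
  rw [A, if_pos (Or.inr h)]

lemma A_one (k s : ℕ) : A k s 1 = 2 ^ (2 * k + 2) - 2 - (if s ≤ k then 2 else 0) := by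
  have c : 1 + 2 * s ≤ 2 * k + 1 ↔ s ≤ k := by omega
  rw [A, if_neg (by omega), if_pos rfl, show 2 * k + 3 - 1 = 2 * k + 2 by omega]
  simp only [Nat.reduceMod, true_and, c]

lemma A_mid {k s j d : ℕ} (h : 2 ≤ j) (hd : j + d = 2 * k + 3) (hd' : 1 ≤ d) :
    A k s j = 2 ^ d - (if j % 2 = 1 ∧ j + 2 * s ≤ 2 * k + 1 then 2 else 0) := by
  rw [A, if_neg (by omega), if_neg (show j ≠ 1 by omega), show 2 * k + 3 - j = d by omega,
    sub_zero]

lemma A_even (k s j : ℕ) : Even (A k s j) := by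
  unfold A
  split_ifs with h h1 h2 h2
  · simp
  all_goals
    obtain ⟨i, hi⟩ : ∃ i, 2 * k + 3 - j = i + 1 := ⟨2 * k + 2 - j, by omega⟩
    rw [hi, pow_succ, Int.even_iff]
    omega

lemma A_ne (k s : ℕ) : A k s (2 * k + 2) ≠ 0 := by
  unfold A
  rw [if_neg (by omega), if_neg (by omega), if_neg (by omega),
    show 2 * k + 3 - (2 * k + 2) = 1 by omega]
  norm_num

lemma Est_empty (k s : ℕ) : IsEmptyState (Est k s) :=
  isEmpty_of_even (m := 2 * k + 2) (fun j _ => A_even k s j) (A_ne k s)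

lemma Est_rule (k s : ℕ) : ruleOf (Est k s) = Rule.zero :=
  rule_zero (m := 2 * k + 2) (fun j _ => A_even k s j) (A_ne k s)

lemma four_le (k : ℕ) : 4 ≤ 2 ^ (2 * k + 2) :=
  (Nat.pow_le_pow_right (n := 2) (by norm_num) (show 2 ≤ 2 * k + 2 by omega))

/-- The Zero rule, followed by dropping `a_0 = -1`, starts the climbing phase. -/
lemma P_Est {k s : ℕ} (hs : s ≤ k) : ∃ f : ℕ → ℤ, P (Est k s) = lst (2 * k + 6) f ∧ f 0 = -1 ∧
    lst (2 * k + 5) (fun j => f (j + 1)) = lst (2 * k + 5) (U k s (2 ^ (2 * k + 2) - 1)) := by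
  refine ⟨_, P_zero (m := 2 * k + 2) (fun j _ => A_even k s j) (A_ne k s) ?_, ?_, ?_⟩
  · intro j hj
    unfold A
    rw [if_pos (by omega)]
  · simp [A]
  · refine lst_congr fun j _ => ?_
    unfold U
    rcases Nat.eq_zero_or_pos j with rfl | hj
    · have := four_le k
      have e2 : ((2 ^ (2 * k + 2) - 1 : ℕ) : ℤ) = 2 ^ (2 * k + 2) - 1 := by
        rw [Nat.cast_sub (by omega)]; simp
      rw [if_pos rfl, e2, A_one, if_pos hs]
      simp
      ring
    · rw [if_neg (show j ≠ 0 by omega)]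
      simp

lemma nearest_top (k j : ℕ) :
    nearest (j + 1) (2 ^ (2 * k + 3) - 4) = nearest j (2 ^ (2 * k + 2) - 2) := by
  rw [show 2 ^ (2 * k + 3) - 4 = 2 * (2 ^ (2 * k + 2) - 2) by
    rw [show 2 * k + 3 = 2 * k + 2 + 1 by ring, pow_succ]; omega, nearest_double]

/-- The parity invariant of the climbing phase. -/
lemma U_parity (k s n : ℕ) {j : ℕ} (hj : 1 ≤ j) : (2 : ℤ) ∣ U k s n j - nearest j n := by
  unfold U
  rw [if_neg (by omega), nearest_n0 hj]
  obtain ⟨a, ha⟩ := A_even k s (j + 1)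
  rw [ha]
  by_cases h1 : j = 2 * k + 2
  · subst h1; simp; omega
  · rw [if_neg h1]
    split_ifs with h
    · obtain ⟨i, hi⟩ : ∃ i, 2 * k + 2 - j = i + 1 := ⟨2 * k + 1 - j, by omega⟩
      rw [hi, pow_succ]
      push_cast
      omega
    · push_cast
      omega

/-- The parity invariant of the falling phase; here it includes `j = 0`. -/
lemma D_parity (k s n j : ℕ) : (2 : ℤ) ∣ D k s n j - nearest j n := by
  unfold D
  split_ifs with h
  · subst h; simp [nearest_zero]
  · have h1 := U_parity k s (2 ^ (2 * k + 3) - 4) (j := j + 1) (by omega)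
    rw [nearest_top] at h1
    omega

/-- In the climbing phase `a_0 = 2^{2k+3} - 5 - n` stays nonnegative before `n` reaches
`2^{2k+3} - 4`. -/
lemma U_step (k s n : ℕ) (h2 : n < 2 ^ (2 * k + 3) - 4) :
    (∃ v < 2 * k + 4, Odd (U k s n v)) ∧
    P (lst (2 * k + 5) (U k s n)) = lst (2 * k + 5) (U k s (n + 1)) := by
  have e : 2 ^ (2 * k + 3) = 2 * 2 ^ (2 * k + 2) := by ring
  have e' : 2 ^ (2 * k + 4) = 4 * 2 ^ (2 * k + 2) := by ring
  have e3 : (2 : ℤ) ^ (2 * k + 3) = 2 * (2 ^ (2 * k + 2) : ℕ) := by push_cast; ring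
  obtain ⟨h, hP⟩ := step (m := 2 * k + 4) (n := n) (f := U k s n) (by omega) (by
    intro j _
    rcases Nat.eq_zero_or_pos j with rfl | hj
    · left
      simp only [U, if_pos, nearest_zero, e3]
      push_cast
      omega
    · exact Or.inr ⟨hj, U_parity k s n hj⟩) (by
      simp only [U, if_pos, e3]
      omega)
  refine ⟨h, hP.trans (lst_congr fun j _ => ?_)⟩
  unfold U
  rcases Nat.eq_zero_or_pos j with rfl | hj
  · simp only [if_true]; push_cast; ring
  · simp only [if_neg hj.ne']; ring

lemma D_step (k s n : ℕ) (h2 : n + 1 ≤ 2 ^ (2 * k + 2) - 2) :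
    (∃ v < 2 * k + 3, Odd (D k s (n + 1) v)) ∧
    P (lst (2 * k + 4) (D k s (n + 1))) = lst (2 * k + 4) (D k s n) := by
  have e : 2 ^ (2 * k + 3) = 2 * 2 ^ (2 * k + 2) := by ring
  obtain ⟨h, hP⟩ := step (m := 2 * k + 3) (n := n) (f := D k s (n + 1)) (by omega)
    (fun j _ => Or.inl (D_parity k s (n + 1) j)) (by
      simp only [D, if_pos]
      omega)
  refine ⟨h, hP.trans (lst_congr fun j _ => ?_)⟩
  unfold D
  rcases Nat.eq_zero_or_pos j with rfl | hj
  · simp only [if_true]; push_cast; ring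
  · simp only [if_neg hj.ne']; ring

lemma cast_n1 (k : ℕ) : ((2 ^ (2 * k + 2) - 2 : ℕ) : ℤ) = 2 ^ (2 * k + 2) - 2 := by
  have := four_le k
  rw [Nat.cast_sub (by omega)]; simp

lemma U_top_zero (k s : ℕ) : U k s (2 ^ (2 * k + 3) - 4) 0 = -1 := by
  have := four_le k
  have e : 2 ^ (2 * k + 3) = 2 * 2 ^ (2 * k + 2) := by ring
  have e3 : (2 : ℤ) ^ (2 * k + 3) = 2 * (2 ^ (2 * k + 2) : ℕ) := by push_cast; ring
  simp only [U, if_pos, e3]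
  rw [e]
  omega

lemma U_top_one (k s : ℕ) : U k s (2 ^ (2 * k + 3) - 4) 1 = 2 ^ (2 * k + 2) - 2 := by
  have h0 := nearest_top k 0
  rw [nearest_zero] at h0
  unfold U A
  rw [if_neg (by omega), if_neg (by omega), if_neg (by omega), if_neg (by omega),
    if_neg (by omega), h0, nearest_n0 le_rfl, if_pos (by omega), cast_n1,
    show 2 * k + 3 - (1 + 1) = 2 * k + 2 - 1 by omega]
  push_cast
  ring

lemma P_U_top (k s : ℕ) : P (lst (2 * k + 5) (U k s (2 ^ (2 * k + 3) - 4))) =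
    lst (2 * k + 4) (D k s (2 ^ (2 * k + 2) - 2)) := by
  rw [P_halve (m := 2 * k + 3) (U_top_zero k s)]
  refine lst_congr fun j _ => ?_
  unfold D
  split_ifs with h
  · subst h; rw [cast_n1]; exact U_top_one k s
  · ring

/-- At Gray code value `0` the state is the next one of the chain. -/
lemma D_zero {k s : ℕ} (hs : s ≤ k) : lst (2 * k + 4) (D k s 0) = Est k (s + 1) := by
  refine lst_congr fun j hj => ?_
  rcases Nat.eq_zero_or_pos j with rfl | hpos
  · simp [D, A]
  have hz : nearest j 0 = 0 := by
    unfold nearest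
    have : 0 < 2 ^ j := by positivity
    exact Nat.div_eq_of_lt (by rw [pow_succ]; omega)
  unfold D U
  rw [if_neg (by omega), if_neg (by omega), nearest_top, hz, nearest_n0 (by omega),
    nearest_n1 (by omega) hpos]
  rcases (show j = 1 ∨ (2 ≤ j ∧ j ≤ 2 * k + 1) ∨ j = 2 * k + 2 ∨ j = 2 * k + 3 by omega) with
    rfl | h | rfl | rfl
  · rw [A_one]
    rcases Nat.eq_zero_or_pos k with rfl | hk
    · obtain rfl : s = 0 := by omega
      simp [A]
    · have hp : 0 < 2 ^ (2 * k) := by positivity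
      have c : 3 + 2 * s ≤ 2 * k + 1 ↔ s + 1 ≤ k := by omega
      rw [A_mid (d := 2 * k) (by omega) (by omega) (by omega), if_pos (show 1 = 1 from rfl),
        if_pos (show 1 + 1 ≤ 2 * k + 2 by omega), if_neg (show 1 + 1 ≠ 2 * k + 2 by omega), show 2 * k + 2 - 1 = 2 * k + 1 by omega,
        show 2 * k + 2 - (1 + 1) = 2 * k by omega, pow_succ,
        Nat.cast_sub (show 1 ≤ 2 ^ (2 * k) * 2 by omega)]
      simp only [Nat.reduceAdd, Nat.reduceMod, true_and, c]
      push_cast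
      ring
  · obtain ⟨d, hd⟩ : ∃ d, 2 * k + 1 = j + d := ⟨2 * k + 1 - j, by omega⟩
    have hA : A k s (j + 1 + 1) + (if j + 1 = 2 * k + 2 then 1 else 0) = 2 ^ d -
        (if j % 2 = 1 ∧ j + 2 * (s + 1) ≤ 2 * k + 1 then 2 else 0) := by
      rcases Nat.eq_zero_or_pos d with rfl | hdp
      · rw [A_out (by omega), if_pos (by omega), if_neg (by omega)]; simp
      · have c : ((j + 1 + 1) % 2 = 1 ∧ j + 1 + 1 + 2 * s ≤ 2 * k + 1) ↔
          (j % 2 = 1 ∧ j + 2 * (s + 1) ≤ 2 * k + 1) := by omega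
        rw [A_mid (d := d) (by omega) (by omega) hdp, if_neg (show j + 1 ≠ 2 * k + 2 by omega)]
        simp only [c, add_zero]
    rw [hA, A_mid (d := d + 2) h.1 (by omega) (by omega), if_neg (show ¬ j = 1 by omega),
      if_pos (show j ≤ 2 * k + 2 by omega), if_pos (show j + 1 ≤ 2 * k + 2 by omega),
      show 2 * k + 2 - j = d + 1 by omega, show 2 * k + 2 - (j + 1) = d by omega]
    push_cast
    ring
  · rw [A_out (by omega), A_mid (d := 1) (by omega) (by omega) le_rfl]
    simp
  · rw [A_out (by omega), A_out (by omega)]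
    simp

/-! ### The trajectory from one empty state to the next -/

lemma iter_U {k s t : ℕ} (hs : s ≤ k) (ht : t ≤ 2 ^ (2 * k + 2) - 3) :
    P^[t + 2] (Est k s) = lst (2 * k + 5) (U k s (2 ^ (2 * k + 2) - 1 + t)) := by
  induction t with
  | zero =>
    obtain ⟨f, h1, h2, h3⟩ := P_Est hs
    change P (P (Est k s)) = _
    rw [h1, P_halve (m := 2 * k + 4) h2, h3]
    rfl
  | succ t ih =>
    have e : 2 ^ (2 * k + 3) = 2 * 2 ^ (2 * k + 2) := by ring
    rw [show t + 1 + 2 = t + 2 + 1 by ring, Function.iterate_succ_apply', ih (by omega),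
      (U_step k s _ (by omega)).2]
    rfl

lemma iter_D {k s t : ℕ} (hs : s ≤ k) (ht : t ≤ 2 ^ (2 * k + 2) - 2) :
    P^[t + 2 ^ (2 * k + 2)] (Est k s) =
      lst (2 * k + 4) (D k s (2 ^ (2 * k + 2) - 2 - t)) := by
  have h4 := four_le k
  induction t with
  | zero =>
    have e : 2 ^ (2 * k + 3) = 2 * 2 ^ (2 * k + 2) := by ring
    have h := iter_U (t := 2 ^ (2 * k + 2) - 3) hs le_rfl
    rw [show 0 + 2 ^ (2 * k + 2) = (2 ^ (2 * k + 2) - 3 + 2) + 1 by omega,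
      Function.iterate_succ_apply', h, Nat.sub_zero, ← P_U_top]
    congr 3
    omega
  | succ t ih =>
    rw [show t + 1 + 2 ^ (2 * k + 2) = t + 2 ^ (2 * k + 2) + 1 by ring,
      Function.iterate_succ_apply', ih (by omega),
      show 2 ^ (2 * k + 2) - 2 - t = 2 ^ (2 * k + 2) - 2 - (t + 1) + 1 by omega,
      (D_step k s _ (by omega)).2]

/-- Strictly between two consecutive states of the chain no state is empty, and every rule is
Increment except for Halve at the two times `1` and `2^{2k+2} - 1`. -/
lemma between {k s t : ℕ} (hs : s ≤ k) (h0 : 0 < t) (ht : t < 2 ^ (2 * k + 3) - 2) :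
    ¬ IsEmptyState (P^[t] (Est k s)) ∧
    ruleOf (P^[t] (Est k s)) =
      if t = 1 ∨ t = 2 ^ (2 * k + 2) - 1 then Rule.halve else Rule.increment := by
  have h4 := four_le k
  have e : 2 ^ (2 * k + 3) = 2 * 2 ^ (2 * k + 2) := by ring
  have gen : ∀ m (f : ℕ → ℤ), P^[t] (Est k s) = lst (m + 1) f → (∃ v < m, Odd (f v)) →
      (f 0 = -1 ↔ t = 1 ∨ t = 2 ^ (2 * k + 2) - 1) → ¬ IsEmptyState (P^[t] (Est k s)) ∧
      ruleOf (P^[t] (Est k s)) =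
        if t = 1 ∨ t = 2 ^ (2 * k + 2) - 1 then Rule.halve else Rule.increment := by
    rintro m f hf ⟨v, hv, ho⟩ hiff
    rw [hf, rule_of_odd hv ho]
    refine ⟨not_empty_of_odd (by omega) ho, ?_⟩
    simp only [hiff]
  rcases (show t = 1 ∨ 2 ≤ t by omega) with rfl | h2
  · obtain ⟨f, h1, hf, -⟩ := P_Est hs
    exact gen (2 * k + 5) f h1 ⟨0, by omega, by rw [hf]; decide⟩ (by simp [hf])
  rcases (show t < 2 ^ (2 * k + 2) ∨ 2 ^ (2 * k + 2) ≤ t by omega) with h3 | h3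
  · obtain ⟨r, rfl⟩ : ∃ r, t = r + 2 := ⟨t - 2, by omega⟩
    have e3 : (2 : ℤ) ^ (2 * k + 3) = 2 * (2 ^ (2 * k + 2) : ℕ) := by push_cast; ring
    refine gen (2 * k + 4) _ (iter_U hs (by omega)) ?_ ?_
    · rcases (show r < 2 ^ (2 * k + 2) - 3 ∨ r = 2 ^ (2 * k + 2) - 3 by omega) with h | h
      · exact (U_step k s _ (by omega)).1
      · rw [show 2 ^ (2 * k + 2) - 1 + r = 2 ^ (2 * k + 3) - 4 by omega]
        exact ⟨0, by omega, by rw [U_top_zero]; decide⟩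
    · simp only [U, if_pos, e3]
      omega
  · obtain ⟨r, rfl⟩ : ∃ r, t = r + 2 ^ (2 * k + 2) := ⟨t - 2 ^ (2 * k + 2), by omega⟩
    refine gen (2 * k + 3) _ (iter_D hs (by omega)) ?_ ?_
    · rw [show 2 ^ (2 * k + 2) - 2 - r = 2 ^ (2 * k + 2) - 2 - r - 1 + 1 by omega]
      exact (D_step k s _ (by omega)).1
    · simp only [D, if_pos]
      omega

lemma nextEmpty {k s : ℕ} (hs : s ≤ k) : NextEmptyAt (Est k s) (2 ^ (2 * k + 3) - 2) ∧
    P^[2 ^ (2 * k + 3) - 2] (Est k s) = Est k (s + 1) := by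
  have h4 := four_le k
  have e : 2 ^ (2 * k + 3) = 2 * 2 ^ (2 * k + 2) := by ring
  have h : P^[2 ^ (2 * k + 3) - 2] (Est k s) = Est k (s + 1) := by
    rw [show 2 ^ (2 * k + 3) - 2 = 2 ^ (2 * k + 2) - 2 + 2 ^ (2 * k + 2) by omega,
      iter_D hs le_rfl, Nat.sub_self, D_zero hs]
  refine ⟨⟨by omega, ?_, fun t h0 ht => (between hs h0 ht).1⟩, h⟩
  rw [h]
  exact Est_empty k (s + 1)

lemma nextEmptyAt_unique {E : State} {m m' : ℕ} (h : NextEmptyAt E m) (h' : NextEmptyAt E m') :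
    m = m' := by
  rcases lt_trichotomy m m' with hlt | heq | hlt
  · exact absurd h.2.1 (h'.2.2 m h.1 hlt)
  · exact heq
  · exact absurd h'.2.1 (h.2.2 m' h'.1 hlt)

lemma N_Est {k s : ℕ} (hs : s ≤ k) : N (Est k s) = Est k (s + 1) := by
  obtain ⟨h1, h2⟩ := nextEmpty hs
  have hex : ∃ m, NextEmptyAt (Est k s) m := ⟨_, h1⟩
  unfold N
  rw [dif_pos hex, nextEmptyAt_unique hex.choose_spec h1, h2]

lemma N_iter (k s : ℕ) (hs : s ≤ k + 1) : N^[s] (Est k 0) = Est k s := by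
  induction s with
  | zero => rfl
  | succ s ih => rw [Function.iterate_succ_apply', ih (by omega), N_Est (by omega)]

/-! ### The first and last states of the chain -/

lemma list_eq_lst (k : ℕ) (a : ℤ) (g f : ℕ → ℤ) (h0 : f 0 = 0) (h1 : f 1 = a)
    (h2 : ∀ i, i < 2 * k + 1 → f (i + 2) = g i) (h3 : f (2 * k + 3) = 0) :
    (0 :: a :: ((List.range (2 * k + 1)).map g ++ [0]) : State) = lst (2 * k + 4) f := by
  apply List.ext_getElem
  · simp [length_lst]
  intro i hi1 hi2
  rw [getElem_lst]
  simp only [length_lst] at hi2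
  rcases i with _ | _ | i
  · simp [h0]
  · simp [h1]
  · rcases (show i < 2 * k + 1 ∨ i = 2 * k + 1 by omega) with h | rfl
    · simp [h, h2 i h]
    · simp [h3]

lemma Efinal_eq (k : ℕ) : Efinal k = Est k 0 := by
  refine list_eq_lst k _ _ _ (by simp [A]) ?_ ?_ (by simp [A])
  · rw [A_one, if_pos (Nat.zero_le k)]
    ring
  · intro i hi
    unfold A
    rw [if_neg (by omega), if_neg (by omega), show 2 * k + 3 - (i + 2) = 2 * k + 1 - i by omega]
    rcases Nat.mod_two_eq_zero_or_one i with h | h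
    · rw [if_neg (by omega), h]; simp
    · rw [if_pos (by omega), h]; simp

lemma Eprime_eq (k : ℕ) : Eprime k = Est k (k + 1) := by
  refine list_eq_lst k _ _ _ (by simp [A]) ?_ ?_ (by simp [A])
  · rw [A_one, if_neg (by omega), sub_zero]
  · intro i hi
    unfold A
    rw [if_neg (by omega), if_neg (by omega), if_neg (by omega),
      show 2 * k + 3 - (i + 2) = 2 * k + 1 - i by omega]
    simp

lemma bump_Est (k : ℕ) : Est k 1 = bump (Est k 0) (2 * k + 1) := by
  unfold bump Est
  rw [getD_lst _ _ _ (by omega)]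
  apply List.ext_getElem
  · simp [length_lst]
  intro i h1 h2
  rw [List.getElem_set, getElem_lst, getElem_lst]
  unfold A
  by_cases hi : 2 * k + 1 = i
  · subst hi
    rw [if_pos (show 2 * k + 1 = 2 * k + 1 from rfl),
      if_neg (show ¬ (2 * k + 1 = 0 ∨ 2 * k + 3 ≤ 2 * k + 1) by omega),
      if_neg (show ¬ ((2 * k + 1) % 2 = 1 ∧ 2 * k + 1 + 2 * 1 ≤ 2 * k + 1) by
      omega), if_pos (show (2 * k + 1) % 2 = 1 ∧ 2 * k + 1 + 2 * 0 ≤ 2 * k + 1 by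
      omega)]
    simp
  · have c : (i % 2 = 1 ∧ i + 2 * 1 ≤ 2 * k + 1) ↔ (i % 2 = 1 ∧ i + 2 * 0 ≤ 2 * k + 1) := by omega
    rw [if_neg hi]
    simp only [c]

lemma bump_inj {E : State} {i j : ℕ} (hi : i < E.length) (h : bump E i = bump E j) : i = j := by
  by_contra hne
  have h1 := congrArg (fun S : State => S.getD i 0) h
  simp [bump, List.getD, hi, Ne.symm hne] at h1

/-- `E_{k,final}` is embanked, with
`h(E_{k,final}) = (2^{2k+2} - 1, 2^{2k+2} - 2)` and `N(E_{k,final}) = E_{k,final}[2k+1]`;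
moreover `N'(E_{k,final}) = (0, 2, 2^2, 2^3, …, 2^{2k}, 2^{2k+1}, 2^{2k+2} - 2, 0)`. -/
theorem statement_17 (k : ℕ) :
    Embanked (Efinal k) ∧
    hVal (Efinal k) 1 = 2 ^ (2 * k + 2) - 1 ∧
    hVal (Efinal k) 2 = 2 ^ (2 * k + 2) - 2 ∧
    N (Efinal k) = bump (Efinal k) (2 * k + 1) ∧
    N' (Efinal k) = Eprime k := by
  rw [Efinal_eq, Eprime_eq]
  have h4 := four_le k
  have e : 2 ^ (2 * k + 3) = 2 * 2 ^ (2 * k + 2) := by ring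
  have e' : 2 ^ (2 * k + 4) = 4 * 2 ^ (2 * k + 2) := by ring
  have r1 : ruleOf (P^[1] (Est k 0)) = Rule.halve := by
    rw [(between k.zero_le (by omega) (by omega)).2, if_pos (Or.inl rfl)]
  have r2 : ruleOf (P^[2 ^ (2 * k + 2) - 1] (Est k 0)) = Rule.halve := by
    rw [(between k.zero_le (by omega) (by omega)).2, if_pos (Or.inr rfl)]
  have hrule : ∀ t, 0 < t → t < 2 ^ (2 * k + 3) - 2 → t ≠ 1 → t ≠ 2 ^ (2 * k + 2) - 1 →
      ruleOf (P^[t] (Est k 0)) = Rule.increment := by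
    intro t h0 ht h1 h2
    rw [(between k.zero_le h0 ht).2, if_neg (by tauto)]
  have hN : N (Est k 0) = bump (Est k 0) (2 * k + 1) := by
    rw [N_Est (Nat.zero_le k), bump_Est]
  have hp : ∀ t, t < 2 ^ (2 * k + 2) - 1 →
      (ruleOf (P^[t] (Est k 0)) = Rule.halve ↔ t = 1) := by
    intro t ht
    constructor
    · intro h
      by_contra h1
      rcases Nat.eq_zero_or_pos t with rfl | h0
      · rw [Function.iterate_zero_apply, Est_rule] at h
        exact absurd h (by decide)
      · rw [hrule t h0 (by omega) h1 (by omega)] at h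
        exact absurd h (by decide)
    · rintro rfl; exact r1
  -- the Halve rules at times `1` and `2^{2k+2} - 1` are the first two
  have n1 : Nat.nth (fun j => ruleOf (P^[j] (Est k 0)) = Rule.halve) 0 = 1 := by
    have := Nat.nth_count (p := fun j => ruleOf (P^[j] (Est k 0)) = Rule.halve) r1
    rwa [Nat.count_eq_card_filter_range, Finset.card_eq_zero.2] at this
    refine Finset.filter_eq_empty_iff.2 fun t ht h => ?_
    have ht := Finset.mem_range.1 ht
    have := (hp t (by omega)).1 h
    omega
  have n2 : Nat.nth (fun j => ruleOf (P^[j] (Est k 0)) = Rule.halve) 1 =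
      2 ^ (2 * k + 2) - 1 := by
    have := Nat.nth_count (p := fun j => ruleOf (P^[j] (Est k 0)) = Rule.halve) r2
    rwa [Nat.count_eq_card_filter_range, Finset.card_eq_one.2 ⟨1, _⟩] at this
    ext t
    rw [Finset.mem_filter, Finset.mem_range, Finset.mem_singleton]
    constructor
    · rintro ⟨ht, h⟩; exact (hp t ht).1 h
    · rintro rfl; exact ⟨by omega, r1⟩
  refine ⟨⟨Est_empty k 0, _, 1, 2 ^ (2 * k + 2) - 1, (nextEmpty (Nat.zero_le k)).1, by omega,
    by omega, by omega, r1, r2, hrule⟩, ?_, ?_, hN, ?_⟩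
  · unfold hVal
    rw [Nat.sub_self, n1, iter_U (t := 0) k.zero_le (by omega)]
    exact nOf_eq (m := 2 * k + 4) (by omega) fun j hj _ => U_parity k 0 _ hj
  · unfold hVal
    rw [n2, show 2 ^ (2 * k + 2) - 1 + 1 = 0 + 2 ^ (2 * k + 2) by omega, iter_D (t := 0) k.zero_le (by omega)]
    exact nOf_eq (m := 2 * k + 3) (by omega) fun j _ _ => D_parity k 0 _ j
  · have hlen : 2 * k + 1 < (Est k 0).length := by rw [Est, length_lst]; omega
    have hex : ∃ i, i < (Est k 0).length ∧ N (Est k 0) = bump (Est k 0) i := ⟨_, hlen, hN⟩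
    have hi : hex.choose = 2 * k + 1 :=
      bump_inj hex.choose_spec.1 (hex.choose_spec.2.symm.trans hN)
    unfold N'
    rw [dif_pos hex, hi, show (2 * k + 1 + 2) / 2 = k + 1 by omega, N_iter k _ le_rfl]

end Skelet17
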